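/- Let Re Ω₀ = e^{135} − e^{146} − e^{236} − e^{245} on ℝ^6, the real part of the standard complex volume form Ω₀ = (e^1 + ie^2) ∧ (e^3 + ie^4) ∧ (e^5 + ie^6). Then the GL(6, ℝ)-orbit of Re Ω₀ is open in the space of alternating 3-forms on ℝ^6: the set { σ : σ(v₁, v₂, v₃) = Re Ω₀(A v₁, A v₂, A v₃) for some invertible linear map A : ℝ^6 → ℝ^6 } is an open subset of the vector space of alternating 3-linear maps (ℝ^6)³ → ℝ. In other words, Re Ω₀ is a stable 3-form. -/

import Mathlib

noncomputable section

/-- The basic alternating 3-form `e^i ∧ e^j ∧ e^k` on `ℝ^6` (determinant convention). -/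
def form3 (i j k : Fin 6) : (Fin 3 → EuclideanSpace ℝ (Fin 6)) → ℝ :=
  fun v => Matrix.det !![v 0 i, v 0 j, v 0 k; v 1 i, v 1 j, v 1 k; v 2 i, v 2 j, v 2 k]

/-- `Re Ω₀ = e^{135} − e^{146} − e^{236} − e^{245}` (indices shifted to `0,…,5`), the real part
of the standard complex volume form on `ℝ^6`. -/
def reOmega0 : (Fin 3 → EuclideanSpace ℝ (Fin 6)) → ℝ :=
  fun v => form3 0 2 4 v - form3 0 3 5 v - form3 1 2 5 v - form3 1 3 4 v

/-!
By the inverse function theorem, a `GL(E)`-orbit of forms is open as soon as its tangent space at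
one point, the image of the infinitesimal action of `End(E)`, is everything. Let `z₁, …, zₙ` be
complex coordinates on `E`. Since `(z₁ ∘ X, …, zₙ ∘ X)` is an arbitrary family of complex-valued
covectors as `X` runs over the real-linear endomorphisms, the tangent space at
`Re (z₁ ∧ ⋯ ∧ zₙ)` contains the real part of every product of an arbitrary covector with `n - 1`
of the `zᵢ`. For `n = 3`, these are the real parts of the forms of type `(3,0) + (2,1)`, which
exhaust the real 3-forms: the remaining types are their complex conjugates. Concretely,
`4 Re a Re b Re c = Re (abc + a̅bc + ab̅c + abc̅)`.
-/

open scoped Nat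

theorem exists_perm_eqOn_of_injOn {α : Type*} [Finite α] {f : α → α} {s : Set α}
    (hf : Set.InjOn f s) : ∃ π : Equiv.Perm α, Set.EqOn π f s := by
  classical
  cases nonempty_fintype α
  obtain ⟨g, hg⟩ := Set.MapsTo.exists_equiv_extend_of_card_eq (t := Finset.univ)
    Finset.card_univ.symm (fun x _ => Finset.mem_coe.2 (Finset.mem_univ (f x))) hf
  exact ⟨g.trans (Equiv.subtypeUnivEquiv Finset.mem_univ), hg⟩

section GLOrbit

variable {𝕜 E F ι : Type*} [NontriviallyNormedField 𝕜] [NormedAddCommGroup E] [NormedSpace 𝕜 E]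
  [NormedAddCommGroup F] [NormedSpace 𝕜 F]

/-- The orbit of a form `ω` under pullback by the continuous linear automorphisms of `E`. -/
def glOrbit (ω : E [⋀^ι]→L[𝕜] F) : Set (E [⋀^ι]→L[𝕜] F) :=
  Set.range fun A : E ≃L[𝕜] E => ω.compContinuousLinearMap (A : E →L[𝕜] E)

theorem compContinuousLinearMap_mem_glOrbit_iff {ω σ : E [⋀^ι]→L[𝕜] F} (A : E ≃L[𝕜] E) :
    σ.compContinuousLinearMap (A : E →L[𝕜] E) ∈ glOrbit ω ↔ σ ∈ glOrbit ω := by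
  constructor
  · rintro ⟨B, hB⟩
    refine ⟨A.symm.trans B, ?_⟩
    ext v
    simpa [Function.comp_def] using DFunLike.congr_fun hB fun i => A.symm (v i)
  · rintro ⟨B, rfl⟩
    exact ⟨A.trans B, rfl⟩

theorem glOrbit_eq_setOf_exists_bijective [CompleteSpace 𝕜] [FiniteDimensional 𝕜 E]
    (ω : E [⋀^ι]→L[𝕜] F) :
    glOrbit ω =
      {σ | ∃ A : E →ₗ[𝕜] E, Function.Bijective A ∧ ∀ v, σ v = ω fun i => A (v i)} := by
  ext σ
  constructor
  · rintro ⟨A, rfl⟩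
    exact ⟨A.toLinearEquiv, A.bijective, fun _ => rfl⟩
  · rintro ⟨A, hA, hσ⟩
    exact ⟨(LinearEquiv.ofBijective A hA).toContinuousLinearEquiv,
      ContinuousAlternatingMap.ext fun v => (hσ v).symm⟩

variable [Fintype ι] [DecidableEq ι]

/-- The tangent space at `ω` of the orbit `glOrbit ω`: the image of `ω` under the infinitesimal
action of the endomorphisms of `E`. -/
def orbitTangentSpace (ω : E [⋀^ι]→L[𝕜] F) : Submodule 𝕜 (E [⋀^ι]→L[𝕜] F) :=
  (ω.fderivCompContinuousLinearMap (.id 𝕜 E)).range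

variable [CompleteSpace E] [CompleteSpace F]

theorem glOrbit_mem_nhds_self {ω : E [⋀^ι]→L[𝕜] F} (h : orbitTangentSpace ω = ⊤) :
    glOrbit ω ∈ nhds ω := by
  have hderiv : HasStrictFDerivAt (fun X : E →L[𝕜] E => ω.compContinuousLinearMap X)
      (ω.fderivCompContinuousLinearMap (.id 𝕜 E)) (.id 𝕜 E) := by
    simpa using (hasStrictFDerivAt_const ω (ContinuousLinearMap.id 𝕜 E)
      ).continuousAlternatingMapCompContinuousLinearMap
        (hasStrictFDerivAt_id (𝕜 := 𝕜) (ContinuousLinearMap.id 𝕜 E))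
  have hunits : {X : E →L[𝕜] E | IsUnit X} ∈ nhds (ContinuousLinearMap.id 𝕜 E) := Units.nhds 1
  have himage := Filter.image_mem_map (m := fun X : E →L[𝕜] E => ω.compContinuousLinearMap X) hunits
  rw [hderiv.map_nhds_eq_of_surj h] at himage
  refine Filter.mem_of_superset himage ?_
  rintro _ ⟨_, ⟨u, rfl⟩, rfl⟩
  exact ⟨ContinuousLinearEquiv.ofUnit u, rfl⟩

theorem isOpen_glOrbit {ω : E [⋀^ι]→L[𝕜] F} (h : orbitTangentSpace ω = ⊤) :
    IsOpen (glOrbit ω) := by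
  rw [isOpen_iff_mem_nhds]
  rintro _ ⟨A, rfl⟩
  let pullback := ContinuousAlternatingMap.compContinuousLinearMapCLM (ι := ι) (F := F)
    (A.symm : E →L[𝕜] E)
  have hω : pullback (ω.compContinuousLinearMap (A : E →L[𝕜] E)) = ω := by
    ext v
    simp [pullback, Function.comp_def]
  have hmem := pullback.continuous.continuousAt.preimage_mem_nhds
    (hω.symm ▸ glOrbit_mem_nhds_self h)
  refine Filter.mem_of_superset hmem fun σ hσ => ?_
  rw [Set.mem_preimage, hω] at hσ
  exact (compContinuousLinearMap_mem_glOrbit_iff A.symm).1 hσ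

end GLOrbit

section Wedge

theorem sum_det_updateCol_eq_sum_det_updateRow {R n : Type*} [CommRing R] [Fintype n]
    [DecidableEq n] (M N : Matrix n n R) :
    ∑ j, (M.updateCol j fun i => N i j).det = ∑ i, (M.updateRow i (N i)).det := by
  have hcol (j : n) : (M.updateCol j fun i => N i j).det = (M.adjugate * N) j j := by
    rw [← Matrix.cramer_apply, Matrix.cramer_eq_adjugate_mulVec]
    rfl
  have hrow (i : n) : (M.updateRow i (N i)).det = (N * M.adjugate) i i := by
    rw [← Matrix.cramer_transpose_apply, Matrix.cramer_eq_adjugate_mulVec,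
      ← Matrix.adjugate_transpose, Matrix.mulVec_transpose]
    rfl
  simp only [hcol, hrow]
  exact Matrix.trace_mul_comm M.adjugate N

variable {𝕜 E A ι : Type*} [NontriviallyNormedField 𝕜] [NormedAddCommGroup E] [NormedSpace 𝕜 E]
  [NormedCommRing A] [NormedAlgebra 𝕜 A] [Fintype ι] [DecidableEq ι]

/-- The exterior product `⋀ᵢ ζ i` of a family of covectors with values in a commutative algebra,
normalised without a factorial, so that its value at `v` is `det (ζ i (v j))`. -/
def wedge (ζ : ι → E →L[𝕜] A) : E [⋀^ι]→L[𝕜] A :=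
  ((ContinuousMultilinearMap.mkPiAlgebra 𝕜 ι A).compContinuousLinearMap ζ).alternatization

theorem wedge_apply_eq_sum (ζ : ι → E →L[𝕜] A) (v : ι → E) :
    wedge ζ v = ∑ π : Equiv.Perm ι, Equiv.Perm.sign π • ∏ i, ζ i (v (π i)) := by
  simp [wedge, ContinuousMultilinearMap.alternatization_apply_apply]

theorem wedge_apply (ζ : ι → E →L[𝕜] A) (v : ι → E) :
    wedge ζ v = (Matrix.of fun i j => ζ i (v j)).det := by
  rw [wedge_apply_eq_sum, ← Matrix.det_transpose, Matrix.det_apply]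
  rfl

theorem wedge_eq_zero_of_eq {ζ : ι → E →L[𝕜] A} {i j : ι} (hij : i ≠ j) (h : ζ i = ζ j) :
    wedge ζ = 0 := by
  ext v
  rw [wedge_apply]
  exact Matrix.det_zero_of_row_eq hij (funext fun k => DFunLike.congr_fun h (v k))

theorem wedge_eq_zero_of_apply_eq_zero {ζ : ι → E →L[𝕜] A} {i : ι} (h : ζ i = 0) :
    wedge ζ = 0 := by
  ext v
  rw [wedge_apply]
  exact Matrix.det_eq_zero_of_row_eq_zero i fun j => DFunLike.congr_fun h (v j)

theorem wedge_comp_perm (ζ : ι → E →L[𝕜] A) (π : Equiv.Perm ι) :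
    wedge (ζ ∘ π) = Equiv.Perm.sign π • wedge ζ := by
  ext v
  simp only [ContinuousAlternatingMap.smul_apply, wedge_apply, Units.smul_def, zsmul_eq_mul]
  exact Matrix.det_permute π (Matrix.of fun i j => ζ i (v j))

theorem wedge_smul (c : ι → A) (ζ : ι → E →L[𝕜] A) :
    wedge (fun i => c i • ζ i) = (∏ i, c i) • wedge ζ := by
  ext v
  simpa [wedge_apply] using Matrix.det_mul_column c (Matrix.of fun i j => ζ i (v j))

theorem fderivCompContinuousLinearMap_wedge (ζ : ι → E →L[𝕜] A) (X : E →L[𝕜] E) :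
    (wedge ζ).fderivCompContinuousLinearMap (.id 𝕜 E) X =
      ∑ i, wedge (Function.update ζ i (ζ i ∘L X)) := by
  ext v
  have h := sum_det_updateCol_eq_sum_det_updateRow (Matrix.of fun i j => ζ i (v j))
    (Matrix.of fun i j => ζ i (X (v j)))
  simp only [ContinuousAlternatingMap.fderivCompContinuousLinearMap_apply,
    ContinuousAlternatingMap.sum_apply, wedge_apply]
  convert h using 4
  · ext i j
    simp only [Matrix.of_apply, Matrix.updateCol_apply, Function.update_apply]
    split_ifs <;> simp_all
  · ext i j
    simp only [Matrix.of_apply, Matrix.updateRow_apply, Function.update_apply]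
    split_ifs <;> simp_all

theorem wedge_update_smul (c : ι → A) (η : ι → E →L[𝕜] A) (i : ι) (ζ : E →L[𝕜] A) :
    wedge (Function.update (fun j => c j • η j) i ζ) =
      wedge (Function.update η i ((∏ j, Function.update c i 1 j) • ζ)) := by
  have hleft : Function.update (fun j => c j • η j) i ζ =
      fun j => Function.update c i 1 j • Function.update η i ζ j := by
    ext j
    by_cases hj : j = i <;> simp [hj]
  have hright (p : A) : Function.update η i (p • ζ) =
      fun j => Function.update (1 : ι → A) i p j • Function.update η i ζ j := by
    ext j
    by_cases hj : j = i <;> simp [hj]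
  rw [hleft, hright, wedge_smul, wedge_smul, Finset.prod_update_of_mem (Finset.mem_univ i) 1]
  simp

theorem factorial_smul_eq_sum_smul_wedge {κ : Type*} [Fintype κ] {e : κ → E} {θ : κ → E →L[𝕜] 𝕜}
    (h : ∀ x, ∑ k, θ k x • e k = x) (f : E [⋀^ι]→L[𝕜] 𝕜) :
    (Fintype.card ι)! • f = ∑ s : ι → κ, f (e ∘ s) • wedge (θ ∘ s) := by
  ext v
  have hexpand (w : ι → E) : f w = ∑ s : ι → κ, (∏ i, θ (s i) (w i)) • f (e ∘ s) := by
    calc f w = f fun i => ∑ k, θ k (w i) • e k := by simp only [h]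
      _ = ∑ s : ι → κ, (∏ i, θ (s i) (w i)) • f (e ∘ s) := by
        have hsum := f.toMultilinearMap.map_sum fun i k => θ k (w i) • e k
        exact hsum.trans (Finset.sum_congr rfl fun s _ => f.toMultilinearMap.map_smul_univ _ _)
  calc ((Fintype.card ι)! • f) v
      = ∑ π : Equiv.Perm ι, Equiv.Perm.sign π • f (v ∘ π) := by
        have hperm (π : Equiv.Perm ι) : f (v ∘ π) = Equiv.Perm.sign π • f v :=
          f.toAlternatingMap.map_perm v π
        simp [hperm, smul_smul, Fintype.card_perm]
    _ = ∑ π : Equiv.Perm ι, ∑ s : ι → κ,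
          f (e ∘ s) • Equiv.Perm.sign π • ∏ i, θ (s i) (v (π i)) := by
        refine Finset.sum_congr rfl fun π _ => ?_
        rw [hexpand, Finset.smul_sum]
        refine Finset.sum_congr rfl fun s _ => ?_
        rw [smul_eq_mul, smul_eq_mul, mul_smul_comm, mul_comm]
        rfl
    _ = (∑ s : ι → κ, f (e ∘ s) • wedge (θ ∘ s)) v := by
        rw [Finset.sum_comm]
        simp only [ContinuousAlternatingMap.sum_apply, ContinuousAlternatingMap.smul_apply,
          wedge_apply_eq_sum, Finset.smul_sum, Function.comp_apply]

end Wedge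

section ComplexVolume

variable {E ι : Type*} [NormedAddCommGroup E] [NormedSpace ℝ E] [Fintype ι] [DecidableEq ι]

/-- The real part of the exterior product of a family of complex-valued covectors. -/
def reWedge (ζ : ι → E →L[ℝ] ℂ) : E [⋀^ι]→L[ℝ] ℝ :=
  Complex.reCLM.compContinuousAlternatingMap (wedge ζ)

theorem reWedge_apply (ζ : ι → E →L[ℝ] ℂ) (v : ι → E) : reWedge ζ v = (wedge ζ v).re := rfl

theorem reWedge_eq_zero {ζ : ι → E →L[ℝ] ℂ} (h : wedge ζ = 0) : reWedge ζ = 0 := by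
  ext v
  simp [reWedge_apply, h]

theorem reWedge_comp_perm (ζ : ι → E →L[ℝ] ℂ) (π : Equiv.Perm ι) :
    reWedge (ζ ∘ π) = Equiv.Perm.sign π • reWedge ζ := by
  ext v
  simp [reWedge_apply, wedge_comp_perm, Units.smul_def]

theorem fderivCompContinuousLinearMap_reWedge (ζ : ι → E →L[ℝ] ℂ) (X : E →L[ℝ] E) :
    (reWedge ζ).fderivCompContinuousLinearMap (.id ℝ E) X =
      ∑ i, reWedge (Function.update ζ i (ζ i ∘L X)) := by
  ext v
  have h := congrArg Complex.re (DFunLike.congr_fun (fderivCompContinuousLinearMap_wedge ζ X) v)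
  simpa [reWedge] using h

/-- The `i`-th complex coordinate function of a real-linear identification of `E` with `ℂ^ι`. -/
def complexCoord (z : E ≃L[ℝ] (ι → ℂ)) (i : ι) : E →L[ℝ] ℂ :=
  ContinuousLinearMap.proj i ∘L (z : E →L[ℝ] (ι → ℂ))

theorem reWedge_update_complexCoord_mem (z : E ≃L[ℝ] (ι → ℂ)) (i : ι) (ζ : E →L[ℝ] ℂ) :
    reWedge (Function.update (complexCoord z) i ζ) ∈
      orbitTangentSpace (reWedge (complexCoord z)) := by
  let X : E →L[ℝ] E := z.symm ∘L ContinuousLinearMap.single ℝ (fun _ => ℂ) i ∘L ζ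
  have hself : complexCoord z i ∘L X = ζ := by
    ext x
    simp [X, complexCoord]
  have hother {j : ι} (hj : j ≠ i) : complexCoord z j ∘L X = 0 := by
    ext x
    simp [X, complexCoord, hj]
  refine ⟨X, ?_⟩
  rw [ContinuousLinearMap.coe_coe, fderivCompContinuousLinearMap_reWedge,
    Finset.sum_eq_single i, hself]
  · intro j _ hj
    exact reWedge_eq_zero (wedge_eq_zero_of_apply_eq_zero (i := j) (by simp [hother hj]))
  · simp

theorem reWedge_update_complexCoord_comp_mem (z : E ≃L[ℝ] (ι → ℂ)) (f : ι → ι) (i : ι)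
    (ζ : E →L[ℝ] ℂ) :
    reWedge (Function.update (complexCoord z ∘ f) i ζ) ∈
      orbitTangentSpace (reWedge (complexCoord z)) := by
  by_cases hf : Set.InjOn f {i}ᶜ
  · obtain ⟨π, hπ⟩ := exists_perm_eqOn_of_injOn hf
    have hperm : Function.update (complexCoord z ∘ f) i ζ =
        Function.update (complexCoord z) (π i) ζ ∘ π := by
      rw [Function.update_comp_equiv, Equiv.symm_apply_apply]
      ext1 j
      by_cases hj : j = i
      · simp [hj]
      · simp [hj, hπ (Set.mem_compl_singleton_iff.2 hj)]
    rw [hperm, reWedge_comp_perm, Units.smul_def]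
    exact zsmul_mem (reWedge_update_complexCoord_mem z (π i) ζ) _
  · simp only [Set.InjOn, Set.mem_compl_singleton_iff] at hf
    push Not at hf
    obtain ⟨j, hj, k, hk, hjk, hne⟩ := hf
    have hzero : wedge (Function.update (complexCoord z ∘ f) i ζ) = 0 :=
      wedge_eq_zero_of_eq hne (by simp [hj, hk, hjk])
    rw [reWedge_eq_zero hzero]
    exact zero_mem _

theorem reWedge_update_smul_complexCoord_comp_mem (z : E ≃L[ℝ] (ι → ℂ)) (c : ι → ℂ) (f : ι → ι)
    (i : ι) (ζ : E →L[ℝ] ℂ) :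
    reWedge (Function.update (fun j => c j • complexCoord z (f j)) i ζ) ∈
      orbitTangentSpace (reWedge (complexCoord z)) := by
  have habsorb : reWedge (Function.update (fun j => c j • complexCoord z (f j)) i ζ) =
      reWedge (Function.update (complexCoord z ∘ f) i ((∏ j, Function.update c i 1 j) • ζ)) :=
    congrArg Complex.reCLM.compContinuousAlternatingMap
      (wedge_update_smul c (complexCoord z ∘ f) i ζ)
  exact habsorb ▸ reWedge_update_complexCoord_comp_mem z f i _

theorem four_mul_prod_re (w : Fin 3 → ℂ) :
    4 * ∏ i, (w i).re =
      (∏ i, w i + ∑ i, ∏ j, Function.update w i (starRingEnd ℂ (w i)) j).re := by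
  simp only [Fin.prod_univ_three, Fin.sum_univ_three, Fin.isValue, Function.update_apply,
    Fin.reduceEq, one_ne_zero, zero_ne_one, ↓reduceIte, Complex.add_re, Complex.mul_re,
    Complex.mul_im, Complex.conj_re, Complex.conj_im]
  ring

theorem four_smul_wedge_re (ζ : Fin 3 → E →L[ℝ] ℂ) :
    (4 : ℝ) • wedge (fun i => Complex.reCLM ∘L ζ i) =
      reWedge ζ + ∑ i, reWedge (Function.update ζ i (Complex.conjCLE ∘L ζ i)) := by
  ext v
  have hprod (π : Equiv.Perm (Fin 3)) := four_mul_prod_re fun i => ζ i (v (π i))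
  simp only [ContinuousAlternatingMap.smul_apply, ContinuousAlternatingMap.add_apply,
    ContinuousAlternatingMap.sum_apply, reWedge_apply, wedge_apply_eq_sum]
  simp only [← Complex.re_sum, ← Complex.add_re]
  rw [Finset.sum_comm, ← Finset.sum_add_distrib, Finset.smul_sum, Complex.re_sum]
  refine Finset.sum_congr rfl fun π _ => ?_
  simp only [← Finset.smul_sum, ← smul_add,
    Function.apply_update (fun j (η : E →L[ℝ] ℂ) => η (v (π j)))]
  rw [smul_comm, Units.smul_def, Units.smul_def, Complex.re_zsmul]
  exact congrArg _ (hprod π)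

theorem wedge_re_smul_complexCoord_mem (z : E ≃L[ℝ] (Fin 3 → ℂ)) (c : Fin 3 → ℂ)
    (f : Fin 3 → Fin 3) :
    wedge (fun i => Complex.reCLM ∘L (c i • complexCoord z (f i))) ∈
      orbitTangentSpace (reWedge (complexCoord z)) := by
  have hupdate := reWedge_update_smul_complexCoord_comp_mem z c f
  have hself : reWedge (fun i => c i • complexCoord z (f i)) ∈
      orbitTangentSpace (reWedge (complexCoord z)) := by
    simpa only [Function.update_eq_self] using hupdate 0 (c 0 • complexCoord z (f 0))
  rw [← Submodule.smul_mem_iff _ (four_ne_zero (α := ℝ)), four_smul_wedge_re]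
  exact add_mem hself (sum_mem fun i _ => hupdate i _)

theorem orbitTangentSpace_reWedge_complexCoord (z : E ≃L[ℝ] (Fin 3 → ℂ)) :
    orbitTangentSpace (reWedge (complexCoord z)) = ⊤ := by
  let e : Fin 3 × Fin 2 → E := fun k => z.symm (Pi.single k.1 (![1, Complex.I] k.2))
  let θ : Fin 3 × Fin 2 → E →L[ℝ] ℝ := fun k =>
    Complex.reCLM ∘L ((![1, -Complex.I] k.2 : ℂ) • complexCoord z k.1)
  have hdual (x : E) : ∑ k, θ k x • e k = x := by
    apply z.injective
    ext p
    simp [θ, e, complexCoord, Fintype.sum_prod_type, Pi.single_apply, Finset.sum_add_distrib]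
  refine Submodule.eq_top_iff'.2 fun σ => ?_
  have hσ := factorial_smul_eq_sum_smul_wedge hdual σ
  rw [Fintype.card_fin] at hσ
  rw [← Submodule.smul_mem_iff _ (Nat.cast_ne_zero (R := ℝ).2 (Nat.factorial_ne_zero 3)),
    Nat.cast_smul_eq_nsmul, hσ]
  exact sum_mem fun s _ => Submodule.smul_mem _ _ (wedge_re_smul_complexCoord_mem z _ _)

theorem statement17_general (z : E ≃L[ℝ] (Fin 3 → ℂ)) :
    IsOpen (glOrbit (reWedge (complexCoord z))) := by
  have : FiniteDimensional ℝ E := z.symm.toLinearEquiv.finiteDimensional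
  have : CompleteSpace E := FiniteDimensional.complete ℝ E
  exact isOpen_glOrbit (orbitTangentSpace_reWedge_complexCoord z)

end ComplexVolume

/-- The complex coordinates `x ↦ (x₀ + i x₁, x₂ + i x₃, x₄ + i x₅)` of `ℝ^6`, whose exterior
product is `Ω₀`. -/
def realSixCoords : EuclideanSpace ℝ (Fin 6) ≃L[ℝ] (Fin 3 → ℂ) :=
  LinearEquiv.toContinuousLinearEquiv
    { toFun := fun x => ![⟨x 0, x 1⟩, ⟨x 2, x 3⟩, ⟨x 4, x 5⟩]
      invFun := fun w => !₂[(w 0).re, (w 0).im, (w 1).re, (w 1).im, (w 2).re, (w 2).im]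
      map_add' := fun x y => by
        ext i
        fin_cases i <;> rfl
      map_smul' := fun c x => by
        ext i
        fin_cases i <;> simp [Complex.ext_iff]
      left_inv := fun x => by
        ext i
        fin_cases i <;> rfl
      right_inv := fun w => by
        ext i
        fin_cases i <;> rfl }

theorem complexCoord_realSixCoords_apply (i : Fin 3) (x : EuclideanSpace ℝ (Fin 6)) :
    complexCoord realSixCoords i x = ![⟨x 0, x 1⟩, ⟨x 2, x 3⟩, ⟨x 4, x 5⟩] i :=
  rfl

theorem reWedge_realSixCoords_apply (v : Fin 3 → EuclideanSpace ℝ (Fin 6)) :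
    reWedge (complexCoord realSixCoords) v = reOmega0 v := by
  simp only [reWedge_apply, wedge_apply, complexCoord_realSixCoords_apply, reOmega0, form3,
    Matrix.det_fin_three, Matrix.of_apply, Matrix.cons_val, Complex.add_re, Complex.sub_re,
    Complex.mul_re, Complex.mul_im]
  ring

/-- The `GL(6, ℝ)`-orbit of `Re Ω₀` is open in the space of alternating
3-forms on `ℝ^6`: `Re Ω₀` is a stable 3-form. -/
theorem statement17 :
    IsOpen {σ : ContinuousAlternatingMap ℝ (EuclideanSpace ℝ (Fin 6)) ℝ (Fin 3) |
      ∃ A : EuclideanSpace ℝ (Fin 6) →ₗ[ℝ] EuclideanSpace ℝ (Fin 6),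
        Function.Bijective A ∧
          ∀ v : Fin 3 → EuclideanSpace ℝ (Fin 6), σ v = reOmega0 (fun i => A (v i))} := by
  simpa only [glOrbit_eq_setOf_exists_bijective, reWedge_realSixCoords_apply] using
    statement17_general realSixCoords
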